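/- Let (ℝ⁴, g(t)) for t ∈ [0,T) be a warped Berger Ricci flow with bounded curvature starting at a complete bounded-curvature warped Berger metric g₀, and set ε := inf_{x>0} (c/b)(x,0). Then for every x > 0 and every t ∈ [0,T) one has ε ≤ (c/b)(x,t) ≤ 1. -/

import Mathlib

open Set Filter Topology MeasureTheory

noncomputable section

/-- Spatial derivative with respect to arclength: `f_s = ξ⁻¹ ∂ₓ f`. -/
def dS (ξ f : ℝ → ℝ → ℝ) (x t : ℝ) : ℝ := (ξ x t)⁻¹ * deriv (fun y => f y t) x

/-- A warped Berger Ricci flow on `ℝ⁴` over `[0,T)`, described by smooth positive radial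
functions `ξ, b, c` of the radial coordinate `x ∈ (0,∞)` and time `t ∈ [0,T)`,
satisfying the Ricci flow equations, completeness, the smoothness boundary conditions
at the origin of `ℝ⁴`, and the Berger ordering `c ≤ b` at `t = 0`. -/
structure WarpedBergerFlow where
  T : ℝ
  T_pos : 0 < T
  ξ : ℝ → ℝ → ℝ
  b : ℝ → ℝ → ℝ
  c : ℝ → ℝ → ℝ
  smooth_ξ : ContDiffOn ℝ (⊤ : ℕ∞) (fun p : ℝ × ℝ => ξ p.1 p.2) (Ioi 0 ×ˢ Ico 0 T)
  smooth_b : ContDiffOn ℝ (⊤ : ℕ∞) (fun p : ℝ × ℝ => b p.1 p.2) (Ioi 0 ×ˢ Ico 0 T)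
  smooth_c : ContDiffOn ℝ (⊤ : ℕ∞) (fun p : ℝ × ℝ => c p.1 p.2) (Ioi 0 ×ˢ Ico 0 T)
  ξ_pos : ∀ x > 0, ∀ t ∈ Ico (0:ℝ) T, 0 < ξ x t
  b_pos : ∀ x > 0, ∀ t ∈ Ico (0:ℝ) T, 0 < b x t
  c_pos : ∀ x > 0, ∀ t ∈ Ico (0:ℝ) T, 0 < c x t
  /-- Ricci flow equation for `b`:
  `b_t = b_ss + (c_s/c + b_s/b) b_s + 2(c² − 2b²)/b³`. -/
  eq_b : ∀ x > 0, ∀ t ∈ Ico (0:ℝ) T,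
    deriv (fun u => b x u) t =
      dS ξ (dS ξ b) x t + (dS ξ c x t / c x t + dS ξ b x t / b x t) * dS ξ b x t
        + 2 * ((c x t) ^ 2 - 2 * (b x t) ^ 2) / (b x t) ^ 3
  /-- Ricci flow equation for `c`: `c_t = c_ss + 2 (b_s/b) c_s − 2c³/b⁴`. -/
  eq_c : ∀ x > 0, ∀ t ∈ Ico (0:ℝ) T,
    deriv (fun u => c x u) t =
      dS ξ (dS ξ c) x t + 2 * (dS ξ b x t / b x t) * dS ξ c x t
        - 2 * (c x t) ^ 3 / (b x t) ^ 4
  /-- Ricci flow equation for `ξ`: `ξ_t = −ξ (2 b_ss/b + c_ss/c)`. -/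
  eq_ξ : ∀ x > 0, ∀ t ∈ Ico (0:ℝ) T,
    deriv (fun u => ξ x u) t =
      -(ξ x t) * (2 * dS ξ (dS ξ b) x t / b x t + dS ξ (dS ξ c) x t / c x t)
  /-- Completeness: the arclength `s(x,t) = ∫₀ˣ ξ(y,t) dy` tends to `∞` as `x → ∞`. -/
  complete : ∀ t ∈ Ico (0:ℝ) T,
    Tendsto (fun x => ∫ y in (0:ℝ)..x, ξ y t) atTop atTop
  /-- Smoothness at the origin: `b → 0` as `x → 0⁺`. -/
  b_origin : ∀ t ∈ Ico (0:ℝ) T, Tendsto (fun x => b x t) (𝓝[>] 0) (𝓝 0)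
  c_origin : ∀ t ∈ Ico (0:ℝ) T, Tendsto (fun x => c x t) (𝓝[>] 0) (𝓝 0)
  /-- Smoothness at the origin: `b_s → 1` as `x → 0⁺`. -/
  bs_origin : ∀ t ∈ Ico (0:ℝ) T, Tendsto (fun x => dS ξ b x t) (𝓝[>] 0) (𝓝 1)
  cs_origin : ∀ t ∈ Ico (0:ℝ) T, Tendsto (fun x => dS ξ c x t) (𝓝[>] 0) (𝓝 1)
  /-- The Berger ordering `c ≤ b` holds at `t = 0`. -/
  ordered_init : ∀ x > 0, c x 0 ≤ b x 0

namespace WarpedBergerFlow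

variable (F : WarpedBergerFlow)

/-- `b_s`. -/
def bS : ℝ → ℝ → ℝ := dS F.ξ F.b
/-- `c_s`. -/
def cS : ℝ → ℝ → ℝ := dS F.ξ F.c
/-- `b_ss`. -/
def bSS : ℝ → ℝ → ℝ := dS F.ξ (dS F.ξ F.b)
/-- `c_ss`. -/
def cSS : ℝ → ℝ → ℝ := dS F.ξ (dS F.ξ F.c)

/-- Sectional curvature `k12 = (4b² − 3c²)/b⁴ − b_s²/b²`. -/
def k12 (x t : ℝ) : ℝ :=
  (4 * (F.b x t) ^ 2 - 3 * (F.c x t) ^ 2) / (F.b x t) ^ 4 - (F.bS x t) ^ 2 / (F.b x t) ^ 2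
/-- Sectional curvature `k13 = c²/b⁴ − b_s c_s/(b c)`. -/
def k13 (x t : ℝ) : ℝ :=
  (F.c x t) ^ 2 / (F.b x t) ^ 4 - F.bS x t * F.cS x t / (F.b x t * F.c x t)
/-- Sectional curvature `k01 = −b_ss/b`. -/
def k01 (x t : ℝ) : ℝ := -(F.bSS x t) / F.b x t
/-- Sectional curvature `k03 = −c_ss/c`. -/
def k03 (x t : ℝ) : ℝ := -(F.cSS x t) / F.c x t
/-- `|Rm| = |k12| + |k13| + |k01| + |k03|`. -/
def RmNorm (x t : ℝ) : ℝ := |F.k12 x t| + |F.k13 x t| + |F.k01 x t| + |F.k03 x t|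
/-- Mean curvature of the Euclidean hypersphere of radius `x`: `H = 2 b_s/b + c_s/c`. -/
def meanH (x t : ℝ) : ℝ := 2 * F.bS x t / F.b x t + F.cS x t / F.c x t

/-- Bounded curvature: `|Rm|` is bounded on `(0,∞) × [0,t₀]` for every `t₀ < T`. -/
def BoundedCurvature : Prop :=
  ∀ t₀ ∈ Ico (0:ℝ) F.T, ∃ C : ℝ, ∀ x > 0, ∀ t ∈ Icc (0:ℝ) t₀, F.RmNorm x t ≤ C

/-- The initial metric belongs to the class `𝒢`: at `t = 0`, `b_s ≥ 0` and `H ≥ 0`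
everywhere, `b(·,0)` is bounded, and `|Rm|(·,0)` is bounded. -/
def InG : Prop :=
  (∀ x > 0, 0 ≤ F.bS x 0) ∧ (∀ x > 0, 0 ≤ F.meanH x 0) ∧
  (∃ M : ℝ, ∀ x > 0, F.b x 0 ≤ M) ∧ (∃ C : ℝ, ∀ x > 0, F.RmNorm x 0 ≤ C)

end WarpedBergerFlow


lemma wb_mono0 {V V' : ℝ → ℝ} {x a : ℝ} (hx : 0 < x)
    (hV : ∀ y ∈ Ioc 0 x, HasDerivAt V (V' y) y) (hV' : ∀ y ∈ Ioc 0 x, V' y ≤ 0)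
    (h0 : Tendsto V (𝓝[>] 0) (𝓝 a)) : V x ≤ a := by
  have hanti : AntitoneOn V (Ioc 0 x) := by
    refine antitoneOn_of_deriv_nonpos (convex_Ioc 0 x)
      (fun y hy => (hV y hy).continuousAt.continuousWithinAt)
      (fun y hy => (hV y (interior_subset hy)).differentiableAt.differentiableWithinAt) ?_
    intro y hy
    rw [(hV y (interior_subset hy)).deriv]
    exact hV' y (interior_subset hy)
  refine ge_of_tendsto h0 ?_
  filter_upwards [Ioc_mem_nhdsGT hx] with y hy
  exact hanti hy ⟨hx, le_rfl⟩ hy.2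

/-- Data of a time slice: arclength `s`, a warping function `b`, `p = b_s`, `q = b_ss`. -/
structure WBProf (C : ℝ) (ξ s b p q : ℝ → ℝ) : Prop where
  C1 : 1 ≤ C
  xi_pos : ∀ x > 0, 0 < ξ x
  hs : ∀ x > 0, HasDerivAt s (ξ x) x
  s0 : Tendsto s (𝓝[>] 0) (𝓝 0)
  sinf : Tendsto s atTop atTop
  bpos : ∀ x > 0, 0 < b x
  hb : ∀ x > 0, HasDerivAt b (ξ x * p x) x
  hp : ∀ x > 0, HasDerivAt p (ξ x * q x) x
  hq : ∀ x > 0, |q x| ≤ C * b x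
  b0 : Tendsto b (𝓝[>] 0) (𝓝 0)
  p1 : Tendsto p (𝓝[>] 0) (𝓝 1)

namespace WBProf
variable {C : ℝ} {ξ s b p q : ℝ → ℝ}

lemma s_mono (h : WBProf C ξ s b p q) : StrictMonoOn s (Ioi 0) := by
  refine strictMonoOn_of_deriv_pos (convex_Ioi 0)
    (fun y hy => (h.hs y hy).continuousAt.continuousWithinAt) ?_
  intro y hy
  have hy' : 0 < y := interior_subset hy
  rw [(h.hs y hy').deriv]
  exact h.xi_pos y hy'

lemma s_nonneg (h : WBProf C ξ s b p q) {x : ℝ} (hx : 0 < x) : 0 ≤ s x := by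
  have := wb_mono0 (V := fun y => - s y) (V' := fun y => - ξ y) (a := -0) hx
    (fun y hy => (h.hs y hy.1).neg) (fun y hy => by have := h.xi_pos y hy.1; linarith) h.s0.neg
  simpa using this

lemma s_pos (h : WBProf C ξ s b p q) {x : ℝ} (hx : 0 < x) : 0 < s x :=
  lt_of_le_of_lt (h.s_nonneg (half_pos hx)) (h.s_mono (mem_Ioi.2 (half_pos hx)) hx (half_lt_self hx))

/-- Wronskian of `b` against `s * exp (κ s²/2)`. -/
lemma wron (h : WBProf C ξ s b p q) (κ : ℝ) {x : ℝ} (hx : 0 < x) :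
    HasDerivAt (fun y => p y * (s y * Real.exp (κ * s y ^ 2 / 2))
      - b y * ((1 + κ * s y ^ 2) * Real.exp (κ * s y ^ 2 / 2)))
      (ξ x * Real.exp (κ * s x ^ 2 / 2) * s x * (q x - b x * (3 * κ + κ ^ 2 * s x ^ 2))) x := by
  have hs := h.hs x hx
  have he : HasDerivAt (fun y => Real.exp (κ * s y ^ 2 / 2))
      (Real.exp (κ * s x ^ 2 / 2) * (κ * (2 * s x * ξ x) / 2)) x := by
    have := (((hs.pow 2).const_mul κ).div_const 2).exp
    refine this.congr_deriv ?_
    simp only [Pi.pow_apply]; push_cast; ring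
  have h2 : HasDerivAt (fun y => 1 + κ * s y ^ 2) (κ * (2 * s x * ξ x)) x := by
    have := ((hs.pow 2).const_mul κ).const_add 1
    refine this.congr_deriv ?_
    push_cast; ring
  have := ((h.hp x hx).mul (hs.mul he)).sub ((h.hb x hx).mul (h2.mul he))
  refine this.congr_deriv ?_
  simp only [Pi.mul_apply]
  ring

lemma wron0 (h : WBProf C ξ s b p q) (κ : ℝ) :
    Tendsto (fun y => p y * (s y * Real.exp (κ * s y ^ 2 / 2))
      - b y * ((1 + κ * s y ^ 2) * Real.exp (κ * s y ^ 2 / 2))) (𝓝[>] 0) (𝓝 0) := by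
  have he : Tendsto (fun y => Real.exp (κ * s y ^ 2 / 2)) (𝓝[>] 0) (𝓝 (Real.exp (κ * 0 ^ 2 / 2))) :=
    (Real.continuous_exp.tendsto _).comp (((h.s0.pow 2).const_mul κ).div_const 2)
  have := (h.p1.mul (h.s0.mul he)).sub (h.b0.mul ((((h.s0.pow 2).const_mul κ).const_add 1).mul he))
  simpa using this

lemma upper (h : WBProf C ξ s b p q) {x : ℝ} (hx : 0 < x) :
    p x / b x ≤ 1 / s x + C * s x := by
  have h1 := wb_mono0 hx (fun y hy => h.wron C hy.1) (fun y hy => by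
    have h1 := h.xi_pos y hy.1
    have h2 := h.s_pos hy.1
    have h3 := h.bpos y hy.1
    have h4 := (abs_le.1 (h.hq y hy.1)).2
    have h5 := h.C1
    refine mul_nonpos_of_nonneg_of_nonpos (by positivity) ?_
    have : 0 ≤ b y * C := by positivity
    have : 0 ≤ b y * (C ^ 2 * s y ^ 2) := by positivity
    nlinarith) (h.wron0 C)
  have he := Real.exp_pos (C * s x ^ 2 / 2)
  have hs := h.s_pos hx
  have hb := h.bpos x hx
  have h2 : p x * s x ≤ b x * (1 + C * s x ^ 2) := by
    have : Real.exp (C * s x ^ 2 / 2) * (p x * s x) ≤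
      Real.exp (C * s x ^ 2 / 2) * (b x * (1 + C * s x ^ 2)) := by linarith
    exact le_of_mul_le_mul_left this he
  have : 1 / s x + C * s x = (1 + C * s x ^ 2) / s x := by field_simp
  rw [this, div_le_div_iff₀ hb hs]
  linarith

lemma lower0 (h : WBProf C ξ s b p q) {x : ℝ} (hx : 0 < x) (hsx : C * s x ^ 2 ≤ 2) :
    1 / s x - C * s x ≤ p x / b x := by
  have h1 := wb_mono0 (a := -0) hx (fun y hy => (h.wron (-C) hy.1).neg) (fun y hy => by
    have h1 := h.xi_pos y hy.1
    have h2 := h.s_pos hy.1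
    have h3 := h.bpos y hy.1
    have h4 := (abs_le.1 (h.hq y hy.1)).1
    have h5 := h.C1
    rw [neg_nonpos]
    refine mul_nonneg (by positivity) ?_
    have hle : s y ≤ s x := h.s_mono.monotoneOn hy.1 hx hy.2
    have : C * s y ^ 2 ≤ 2 := le_trans (by gcongr) hsx
    have : 0 ≤ b y * C * (2 - C * s y ^ 2) := mul_nonneg (by positivity) (by linarith)
    nlinarith) (h.wron0 (-C)).neg
  rw [Pi.neg_apply] at h1
  have he := Real.exp_pos (-C * s x ^ 2 / 2)
  have hs := h.s_pos hx
  have hb := h.bpos x hx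
  have h2 : b x * (1 - C * s x ^ 2) ≤ p x * s x := by
    have : Real.exp (-C * s x ^ 2 / 2) * (b x * (1 - C * s x ^ 2)) ≤
      Real.exp (-C * s x ^ 2 / 2) * (p x * s x) := by linarith
    exact le_of_mul_le_mul_left this he
  have : 1 / s x - C * s x = (1 - C * s x ^ 2) / s x := by field_simp
  rw [this, div_le_div_iff₀ hs hb]
  linarith

lemma lower (h : WBProf C ξ s b p q) {x : ℝ} (hx : 0 < x) : -C ≤ p x / b x := by
  have hC := h.C1
  rw [le_div_iff₀ (h.bpos x hx)]
  by_contra hcon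
  push Not at hcon
  set E : ℝ → ℝ := fun y => Real.exp (-C * s y) with hE
  have hz : AntitoneOn (fun y => Real.exp (-C * s y) * (p y + C * b y)) (Ioi 0) := by
    have hd : ∀ y > 0, HasDerivAt (fun y => Real.exp (-C * s y) * (p y + C * b y))
        (Real.exp (-C * s y) * (-C * ξ y) * (p y + C * b y)
          + Real.exp (-C * s y) * (ξ y * q y + C * (ξ y * p y))) y := fun y hy =>
      (((h.hs y hy).const_mul (-C)).exp).mul ((h.hp y hy).add ((h.hb y hy).const_mul C))
    refine antitoneOn_of_deriv_nonpos (convex_Ioi 0)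
      (fun y hy => (hd y hy).continuousAt.continuousWithinAt)
      (fun y hy => (hd y (interior_subset hy)).differentiableAt.differentiableWithinAt) ?_
    intro y hy
    have hy' : 0 < y := interior_subset hy
    rw [(hd y hy').deriv]
    have h1 := h.xi_pos y hy'
    have h3 := h.bpos y hy'
    have h4 := (abs_le.1 (h.hq y hy')).2
    have : q y ≤ C ^ 2 * b y := le_trans h4 (by gcongr; nlinarith)
    have e : Real.exp (-C * s y) * (-C * ξ y) * (p y + C * b y)
          + Real.exp (-C * s y) * (ξ y * q y + C * (ξ y * p y))
        = -(Real.exp (-C * s y) * ξ y * (C ^ 2 * b y - q y)) := by ring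
    rw [e, neg_nonpos]
    exact mul_nonneg (by positivity) (by linarith)
  set η : ℝ := -(Real.exp (-C * s x) * (p x + C * b x)) with hη
  have hηpos : 0 < η := by
    have : 0 < Real.exp (-C * s x) * (-(p x + C * b x)) :=
      mul_pos (Real.exp_pos _) (by linarith)
    rw [hη]; linarith
  have hw : AntitoneOn (fun y => Real.exp (C * s y) * b y + η * s y) (Ici x) := by
    have hd : ∀ y > 0, HasDerivAt (fun y => Real.exp (C * s y) * b y + η * s y)
        (Real.exp (C * s y) * (C * ξ y) * b y + Real.exp (C * s y) * (ξ y * p y) + η * ξ y) y :=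
      fun y hy => ((((h.hs y hy).const_mul C).exp).mul (h.hb y hy)).add ((h.hs y hy).const_mul η)
    have hpos : ∀ y ∈ Ici x, 0 < y := fun y hy => lt_of_lt_of_le hx hy
    refine antitoneOn_of_deriv_nonpos (convex_Ici x)
      (fun y hy => (hd y (hpos y hy)).continuousAt.continuousWithinAt)
      (fun y hy => (hd y (hpos y (interior_subset hy))).differentiableAt.differentiableWithinAt) ?_
    intro y hy
    have hyx : x ≤ y := interior_subset hy
    have hy' : 0 < y := lt_of_lt_of_le hx hyx
    rw [(hd y hy').deriv]
    have h1 := h.xi_pos y hy'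
    have hle : Real.exp (-C * s y) * (p y + C * b y) ≤ -η := by
      have := hz hx hy' hyx
      simp only at this
      rw [hη]; linarith
    have hle2 : p y + C * b y ≤ -η * Real.exp (C * s y) := by
      have h5 : Real.exp (C * s y) * Real.exp (-C * s y) = 1 := by
        rw [← Real.exp_add]; simp
      have := mul_le_mul_of_nonneg_left hle (Real.exp_pos (C * s y)).le
      rw [← mul_assoc, h5] at this
      linarith
    have h6 : 1 ≤ Real.exp (C * s y) := Real.one_le_exp (by
      have := h.s_nonneg hy'; positivity)
    have h7 : Real.exp (C * s y) * (p y + C * b y) ≤ -η := by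
      have a1 := mul_le_mul_of_nonneg_left hle2 (Real.exp_pos (C * s y)).le
      nlinarith [mul_nonneg hηpos.le (sub_nonneg.2 h6), mul_nonneg (mul_nonneg hηpos.le (sub_nonneg.2 h6)) (sub_nonneg.2 h6)]
    nlinarith
  have hup : ∀ y ∈ Ici x, s y ≤ (Real.exp (C * s x) * b x + η * s x) / η := by
    intro y hy
    have h1 := hw (mem_Ici.2 le_rfl) hy hy
    simp only at h1
    have h2 : 0 < Real.exp (C * s y) * b y :=
      mul_pos (Real.exp_pos _) (h.bpos y (lt_of_lt_of_le hx hy))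
    rw [le_div_iff₀ hηpos]
    linarith
  obtain ⟨y, hy1, hy2⟩ := ((h.sinf.eventually_gt_atTop
    ((Real.exp (C * s x) * b x + η * s x) / η)).and (eventually_ge_atTop x)).exists
  exact absurd (hup y hy2) (not_le.2 hy1)

end WBProf

lemma wb_logratio {C : ℝ} {ξ s b p q c pc qc : ℝ → ℝ} (hb : WBProf C ξ s b p q)
    (hc : WBProf C ξ s c pc qc) {x : ℝ} (hx : 0 < x) :
    Real.log (c x) - Real.log (b x) ≤ C * (s x ^ 2 + s x) := by
  have hC := hb.C1
  have hL : ∀ y > 0, HasDerivAt (fun y => Real.log (c y) - Real.log (b y) - C * (s y ^ 2 + s y))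
      (ξ y * (pc y / c y - p y / b y - C * (2 * s y + 1))) y := by
    intro y hy
    have h1 := (((hc.hb y hy).log (hc.bpos y hy).ne').sub ((hb.hb y hy).log (hb.bpos y hy).ne')).sub
      ((((hb.hs y hy).pow 2).add (hb.hs y hy)).const_mul C)
    refine h1.congr_deriv ?_
    push_cast; ring
  have hlim : Tendsto (fun y => c y / b y) (𝓝[>] 0) (𝓝 1) := by
    refine HasDerivAt.lhopital_zero_nhdsGT (f' := fun y => ξ y * pc y) (g' := fun y => ξ y * p y)
      ?_ ?_ ?_ hc.b0 hb.b0 ?_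
    · filter_upwards [self_mem_nhdsWithin] with y hy using hc.hb y hy
    · filter_upwards [self_mem_nhdsWithin] with y hy using hb.hb y hy
    · filter_upwards [self_mem_nhdsWithin, hb.p1.eventually (lt_mem_nhds one_half_lt_one)] with y hy h2
      exact mul_ne_zero (hb.xi_pos y hy).ne' (by linarith)
    · have := hc.p1.div hb.p1 one_ne_zero
      rw [div_one] at this
      refine this.congr' ?_
      filter_upwards [self_mem_nhdsWithin] with y hy
      rw [Pi.div_apply, mul_div_mul_left _ _ (hb.xi_pos y hy).ne']
  have hlim2 : Tendsto (fun y => Real.log (c y) - Real.log (b y) - C * (s y ^ 2 + s y)) (𝓝[>] 0)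
      (𝓝 0) := by
    have h1 : Tendsto (fun y => Real.log (c y / b y)) (𝓝[>] 0) (𝓝 (Real.log 1)) :=
      ((Real.continuousAt_log one_ne_zero).tendsto).comp hlim
    have h2 := h1.sub (((hb.s0.pow 2).add hb.s0).const_mul C)
    simp only [Real.log_one] at h2
    norm_num at h2
    refine h2.congr' ?_
    filter_upwards [self_mem_nhdsWithin] with y hy
    rw [Real.log_div (hc.bpos y hy).ne' (hb.bpos y hy).ne']
  have := wb_mono0 hx (fun y hy => hL y hy.1) (fun y hy => by
    refine mul_nonpos_of_nonneg_of_nonpos (hb.xi_pos y hy.1).le ?_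
    have h1 := hc.upper hy.1
    have h2 := hb.lower hy.1
    have hs := hb.s_pos hy.1
    by_cases hcs : C * s y ^ 2 ≤ 2
    · have h3 := hb.lower0 hy.1 hcs
      linarith
    · push Not at hcs
      have : 1 / s y ≤ C * s y := by
        rw [div_le_iff₀ hs]; nlinarith
      linarith) hlim2
  linarith

lemma wb_second {G D ξ : ℝ → ℝ} {x d : ℝ} (hx : 0 < x)
    (hG : ∀ y > 0, HasDerivAt G (ξ y * D y) y) (hξ : ∀ y > 0, 0 < ξ y)
    (hmax : ∀ y > 0, G y ≤ G x) (hD : HasDerivAt D d x) : D x = 0 ∧ d ≤ 0 := by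
  have hloc : IsLocalMax G x := by
    filter_upwards [Ioi_mem_nhds hx] with y hy using hmax y hy
  have h0 : D x = 0 := by
    have := hloc.hasDerivAt_eq_zero (hG x hx)
    exact (mul_eq_zero.1 this).resolve_left (hξ x hx).ne'
  refine ⟨h0, ?_⟩
  by_contra hd
  push Not at hd
  have hsl := (hasDerivAt_iff_tendsto_slope.1 hD).mono_left
    (nhdsWithin_mono x (fun y (hy : y ∈ Ioi x) => (ne_of_gt hy : y ≠ x)))
  have hev := hsl.eventually (lt_mem_nhds hd)
  obtain ⟨u, hu, hsub⟩ := mem_nhdsGT_iff_exists_Ioo_subset.1 hev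
  have hu' : x < u := hu
  have hmono : StrictMonoOn G (Icc x ((x + u) / 2)) := by
    refine strictMonoOn_of_deriv_pos (convex_Icc _ _)
      (fun y hy => (hG y (lt_of_lt_of_le hx hy.1)).continuousAt.continuousWithinAt) ?_
    intro y hy
    rw [interior_Icc] at hy
    have hy0 : 0 < y := hx.trans hy.1
    rw [(hG y hy0).deriv]
    have hs : 0 < slope D x y := hsub ⟨hy.1, by linarith [hy.2]⟩
    rw [slope_def_field, h0, sub_zero] at hs
    have hD : 0 < D y := by
      have := mul_pos hs (sub_pos.2 hy.1)
      rwa [div_mul_cancel₀ _ (sub_pos.2 hy.1).ne'] at this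
    exact mul_pos (hξ y hy0) hD
  have h1 := hmono (left_mem_Icc.2 (by linarith)) (right_mem_Icc.2 (by linarith))
    (by linarith : x < (x + u) / 2)
  exact absurd (hmax _ (by linarith)) (not_le.2 h1)

lemma wb_time {h : ℝ → ℝ} {t h' : ℝ} (ht : 0 < t) (hh : HasDerivAt h h' t)
    (hmax : ∀ u ∈ Ioo 0 t, h u ≤ h t) : 0 ≤ h' := by
  have hsl := (hasDerivAt_iff_tendsto_slope.1 hh).mono_left
    (nhdsWithin_mono t (fun y (hy : y ∈ Iio t) => (ne_of_lt hy : y ≠ t)))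
  refine ge_of_tendsto hsl ?_
  filter_upwards [Ioo_mem_nhdsLT ht] with u hu
  rw [slope_def_field]
  exact div_nonneg_of_nonpos (by linarith [hmax u hu]) (by linarith [hu.2])

namespace WarpedBergerFlow
variable (F : WarpedBergerFlow)

lemma wb_slice {f : ℝ → ℝ → ℝ} {T t : ℝ}
    (hf : ContDiffOn ℝ (⊤ : ℕ∞) (fun p : ℝ × ℝ => f p.1 p.2) (Ioi 0 ×ˢ Ico 0 T))
    (ht : t ∈ Ico (0:ℝ) T) : ContDiffOn ℝ (⊤ : ℕ∞) (fun y => f y t) (Ioi 0) :=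
  hf.comp (g := fun p : ℝ × ℝ => f p.1 p.2) (f := fun y => (y, t))
    (by fun_prop) (fun y hy => ⟨hy, ht⟩)

lemma wb_tslice {f : ℝ → ℝ → ℝ} {T x : ℝ}
    (hf : ContDiffOn ℝ (⊤ : ℕ∞) (fun p : ℝ × ℝ => f p.1 p.2) (Ioi 0 ×ˢ Ico 0 T))
    (hx : 0 < x) : ContDiffOn ℝ (⊤ : ℕ∞) (fun u => f x u) (Ico 0 T) :=
  hf.comp (g := fun p : ℝ × ℝ => f p.1 p.2) (f := fun u => (x, u))
    (by fun_prop) (fun y hy => ⟨hx, hy⟩)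

lemma wb_thas {f : ℝ → ℝ → ℝ} {T x t : ℝ}
    (hf : ContDiffOn ℝ (⊤ : ℕ∞) (fun p : ℝ × ℝ => f p.1 p.2) (Ioi 0 ×ˢ Ico 0 T))
    (hx : 0 < x) (ht : t ∈ Ioo 0 T) :
    HasDerivAt (fun u => f x u) (deriv (fun u => f x u) t) t :=
  (((wb_tslice hf hx).contDiffAt (Ico_mem_nhds ht.1 ht.2)).differentiableAt (by simp)).hasDerivAt

lemma wb_has {f : ℝ → ℝ → ℝ}
    (hf : ContDiffOn ℝ (⊤ : ℕ∞) (fun p : ℝ × ℝ => f p.1 p.2) (Ioi 0 ×ˢ Ico 0 F.T))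
    {x t : ℝ} (hx : 0 < x) (ht : t ∈ Ico (0:ℝ) F.T) :
    HasDerivAt (fun y => f y t) (F.ξ x t * dS F.ξ f x t) x := by
  have h := (((wb_slice hf ht).contDiffAt (Ioi_mem_nhds hx)).differentiableAt (by simp)).hasDerivAt
  refine h.congr_deriv ?_
  rw [dS, mul_inv_cancel_left₀ (F.ξ_pos x hx t ht).ne']

lemma wb_has2 {f : ℝ → ℝ → ℝ}
    (hf : ContDiffOn ℝ (⊤ : ℕ∞) (fun p : ℝ × ℝ => f p.1 p.2) (Ioi 0 ×ˢ Ico 0 F.T))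
    {x t : ℝ} (hx : 0 < x) (ht : t ∈ Ico (0:ℝ) F.T) :
    HasDerivAt (fun y => dS F.ξ f y t) (F.ξ x t * dS F.ξ (dS F.ξ f) x t) x := by
  have h1 : DifferentiableAt ℝ (fun y => F.ξ y t) x :=
    ((wb_slice F.smooth_ξ ht).contDiffAt (Ioi_mem_nhds hx)).differentiableAt (by simp)
  have h2 : DifferentiableAt ℝ (deriv (fun y => f y t)) x :=
    (((wb_slice hf ht).deriv_of_isOpen isOpen_Ioi (m := 1) (by norm_cast)).contDiffAt
      (Ioi_mem_nhds hx)).differentiableAt (by simp)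
  have h3 : DifferentiableAt ℝ (fun y => dS F.ξ f y t) x :=
    (h1.inv (F.ξ_pos x hx t ht).ne').mul h2
  refine h3.hasDerivAt.congr_deriv ?_
  conv_rhs => rw [dS]
  rw [mul_inv_cancel_left₀ (F.ξ_pos x hx t ht).ne']

/-- arclength -/
def arc (x t : ℝ) : ℝ := ∫ y in (0:ℝ)..x, F.ξ y t

lemma arc_int {x t : ℝ} (hx : 0 < x) (ht : t ∈ Ico (0:ℝ) F.T) :
    IntervalIntegrable (fun y => F.ξ y t) volume 0 x := by
  obtain ⟨X, hX1, hX2⟩ := (((F.complete t ht).eventually_ge_atTop 1).and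
    (eventually_ge_atTop x)).exists
  have h : IntervalIntegrable (fun y => F.ξ y t) volume 0 X := by
    by_contra hcon
    rw [intervalIntegral.integral_undef hcon] at hX1
    linarith
  refine h.mono_set ?_
  rw [uIcc_of_le hx.le, uIcc_of_le (hx.le.trans hX2)]
  exact Icc_subset_Icc_right hX2

lemma arc_has {x t : ℝ} (hx : 0 < x) (ht : t ∈ Ico (0:ℝ) F.T) :
    HasDerivAt (fun y => F.arc y t) (F.ξ x t) x := by
  have hc := (wb_slice F.smooth_ξ ht).continuousOn
  exact intervalIntegral.integral_hasDerivAt_right (F.arc_int hx ht)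
    (hc.stronglyMeasurableAtFilter isOpen_Ioi x hx) (hc.continuousAt (Ioi_mem_nhds hx))

lemma arc_zero {t : ℝ} (ht : t ∈ Ico (0:ℝ) F.T) :
    Tendsto (fun y => F.arc y t) (𝓝[>] 0) (𝓝 0) := by
  have h := intervalIntegral.continuousOn_primitive_interval' (F.arc_int one_pos ht)
    (left_mem_uIcc)
  have h0 := h 0 left_mem_uIcc
  rw [uIcc_of_le zero_le_one] at h0
  have h1 : Tendsto (fun y => F.arc y t) (𝓝[Icc 0 1] 0) (𝓝 (∫ y in (0:ℝ)..0, F.ξ y t)) := h0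
  rw [intervalIntegral.integral_same] at h1
  refine h1.mono_left ?_
  rw [← nhdsWithin_Ioc_eq_nhdsGT (zero_lt_one (α := ℝ))]
  exact nhdsWithin_mono _ Ioc_subset_Icc_self

lemma profB {C t : ℝ} (hC : 1 ≤ C) (ht : t ∈ Ico (0:ℝ) F.T)
    (h : ∀ x > 0, F.RmNorm x t ≤ C) :
    WBProf C (fun x => F.ξ x t) (fun x => F.arc x t) (fun x => F.b x t)
      (fun x => dS F.ξ F.b x t) (fun x => dS F.ξ (dS F.ξ F.b) x t) where
  C1 := hC
  xi_pos x hx := F.ξ_pos x hx t ht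
  hs x hx := F.arc_has hx ht
  s0 := F.arc_zero ht
  sinf := F.complete t ht
  bpos x hx := F.b_pos x hx t ht
  hb x hx := F.wb_has F.smooth_b hx ht
  hp x hx := F.wb_has2 F.smooth_b hx ht
  hq x hx := by
    have hb := F.b_pos x hx t ht
    have h1 := h x hx
    have h2 : |F.k01 x t| ≤ C := by
      unfold RmNorm at h1
      linarith [abs_nonneg (F.k12 x t), abs_nonneg (F.k13 x t), abs_nonneg (F.k03 x t)]
    rwa [k01, bSS, abs_div, abs_neg, abs_of_pos hb, div_le_iff₀ hb] at h2
  b0 := F.b_origin t ht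
  p1 := F.bs_origin t ht

lemma profC {C t : ℝ} (hC : 1 ≤ C) (ht : t ∈ Ico (0:ℝ) F.T)
    (h : ∀ x > 0, F.RmNorm x t ≤ C) :
    WBProf C (fun x => F.ξ x t) (fun x => F.arc x t) (fun x => F.c x t)
      (fun x => dS F.ξ F.c x t) (fun x => dS F.ξ (dS F.ξ F.c) x t) where
  C1 := hC
  xi_pos x hx := F.ξ_pos x hx t ht
  hs x hx := F.arc_has hx ht
  s0 := F.arc_zero ht
  sinf := F.complete t ht
  bpos x hx := F.c_pos x hx t ht
  hb x hx := F.wb_has F.smooth_c hx ht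
  hp x hx := F.wb_has2 F.smooth_c hx ht
  hq x hx := by
    have hb := F.c_pos x hx t ht
    have h1 := h x hx
    have h2 : |F.k03 x t| ≤ C := by
      unfold RmNorm at h1
      linarith [abs_nonneg (F.k12 x t), abs_nonneg (F.k13 x t), abs_nonneg (F.k01 x t)]
    rwa [k03, cSS, abs_div, abs_neg, abs_of_pos hb, div_le_iff₀ hb] at h2
  b0 := F.c_origin t ht
  p1 := F.cs_origin t ht

lemma xi_t {C t₀ : ℝ} (ht₀ : t₀ < F.T)
    (h : ∀ x > 0, ∀ t ∈ Icc (0:ℝ) t₀, F.RmNorm x t ≤ C) {x t : ℝ} (hx : 0 < x)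
    (ht : t ∈ Ioo 0 t₀) :
    |deriv (fun u => F.ξ x u) t| ≤ 2 * C * F.ξ x t := by
  have htT : t ∈ Ico (0:ℝ) F.T := ⟨ht.1.le, ht.2.trans ht₀⟩
  have hb := F.b_pos x hx t htT
  have hc := F.c_pos x hx t htT
  have hξ := F.ξ_pos x hx t htT
  have h1 := h x hx t ⟨ht.1.le, ht.2.le⟩
  unfold RmNorm at h1
  have e : deriv (fun u => F.ξ x u) t = F.ξ x t * (2 * F.k01 x t + F.k03 x t) := by
    rw [F.eq_ξ x hx t htT, k01, k03, bSS, cSS]; ring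
  rw [e, abs_mul, abs_of_pos hξ, mul_comm]
  gcongr
  have := abs_add_le (2 * F.k01 x t) (F.k03 x t)
  rw [abs_mul, abs_two] at this
  linarith [abs_nonneg (F.k12 x t), abs_nonneg (F.k13 x t), abs_nonneg (F.k03 x t)]

lemma xi_compare {C t₀ : ℝ} (ht₀ : t₀ < F.T)
    (h : ∀ x > 0, ∀ t ∈ Icc (0:ℝ) t₀, F.RmNorm x t ≤ C) {x t u : ℝ} (hx : 0 < x)
    (ht : t ∈ Icc 0 t₀) (hu : u ∈ Icc 0 t₀) :
    F.ξ x u ≤ Real.exp (2 * C * |u - t|) * F.ξ x t := by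
  have hcont : ContinuousOn (fun u => F.ξ x u) (Icc 0 t₀) :=
    (wb_tslice F.smooth_ξ hx).continuousOn.mono (fun y hy => ⟨hy.1, hy.2.trans_lt ht₀⟩)
  have hd : ∀ (κ : ℝ), ∀ v ∈ Ioo 0 t₀, HasDerivAt (fun u => Real.exp (κ * u) * F.ξ x u)
      (Real.exp (κ * v) * (κ * F.ξ x v + deriv (fun u => F.ξ x u) v)) v := by
    intro κ v hv
    have h1 := (((hasDerivAt_id v).const_mul κ).exp).mul
      (wb_thas F.smooth_ξ hx ⟨hv.1, hv.2.trans ht₀⟩)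
    refine h1.congr_deriv ?_
    simp only [id]; ring
  have hco : ∀ κ : ℝ, ContinuousOn (fun u => Real.exp (κ * u) * F.ξ x u) (Icc 0 t₀) :=
    fun κ => (by fun_prop : Continuous fun u : ℝ => Real.exp (κ * u)).continuousOn.mul hcont
  have hmono : MonotoneOn (fun u => Real.exp ((2 * C) * u) * F.ξ x u) (Icc 0 t₀) := by
    refine monotoneOn_of_deriv_nonneg (convex_Icc _ _) (hco _) ?_ ?_
    · intro v hv; rw [interior_Icc] at hv
      exact (hd _ v hv).differentiableAt.differentiableWithinAt
    · intro v hv; rw [interior_Icc] at hv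
      rw [(hd _ v hv).deriv]
      have := (abs_le.1 (F.xi_t ht₀ h hx hv)).1
      exact mul_nonneg (Real.exp_pos _).le (by linarith)
  have hanti : AntitoneOn (fun u => Real.exp (-(2 * C) * u) * F.ξ x u) (Icc 0 t₀) := by
    refine antitoneOn_of_deriv_nonpos (convex_Icc _ _) (hco _) ?_ ?_
    · intro v hv; rw [interior_Icc] at hv
      exact (hd _ v hv).differentiableAt.differentiableWithinAt
    · intro v hv; rw [interior_Icc] at hv
      rw [(hd _ v hv).deriv]
      have := (abs_le.1 (F.xi_t ht₀ h hx hv)).2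
      exact mul_nonpos_of_nonneg_of_nonpos (Real.exp_pos _).le (by linarith)
  rcases le_total u t with hut | hut
  · have h1 := hmono hu ht hut
    simp only at h1
    have h2 := mul_le_mul_of_nonneg_left h1 (Real.exp_pos (-(2 * C * u))).le
    rw [← mul_assoc, ← mul_assoc, ← Real.exp_add, ← Real.exp_add] at h2
    rw [abs_of_nonpos (by linarith)]
    have e1 : -(2 * C * u) + 2 * C * u = 0 := by ring
    have e2 : -(2 * C * u) + 2 * C * t = 2 * C * -(u - t) := by ring
    rwa [e1, e2, Real.exp_zero, one_mul] at h2
  · have h1 := hanti ht hu hut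
    simp only at h1
    have h2 := mul_le_mul_of_nonneg_left h1 (Real.exp_pos ((2 * C * u))).le
    rw [← mul_assoc, ← mul_assoc, ← Real.exp_add, ← Real.exp_add] at h2
    rw [abs_of_nonneg (by linarith)]
    have e1 : (2 * C * u) + -(2 * C) * u = 0 := by ring
    have e2 : (2 * C * u) + -(2 * C) * t = 2 * C * (u - t) := by ring
    rwa [e1, e2, Real.exp_zero, one_mul] at h2

lemma arc_compare {C t₀ : ℝ} (ht₀ : t₀ < F.T)
    (h : ∀ x > 0, ∀ t ∈ Icc (0:ℝ) t₀, F.RmNorm x t ≤ C) {x t u : ℝ} (hx : 0 < x)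
    (ht : t ∈ Icc 0 t₀) (hu : u ∈ Icc 0 t₀) :
    F.arc x u ≤ Real.exp (2 * C * |u - t|) * F.arc x t := by
  unfold arc
  rw [← intervalIntegral.integral_const_mul]
  refine intervalIntegral.integral_mono_on_of_le_Ioo hx.le
    (F.arc_int hx ⟨hu.1, hu.2.trans_lt ht₀⟩)
    ((F.arc_int hx ⟨ht.1, ht.2.trans_lt ht₀⟩).const_mul _) ?_
  intro y hy
  exact F.xi_compare ht₀ h hy.1 ht hu

lemma arc_cont {C t₀ : ℝ} (ht₀ : t₀ < F.T)
    (h : ∀ x > 0, ∀ t ∈ Icc (0:ℝ) t₀, F.RmNorm x t ≤ C) :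
    ContinuousOn (fun p : ℝ × ℝ => F.arc p.1 p.2) (Ioi 0 ×ˢ Icc 0 t₀) := by
  rintro ⟨x, t⟩ ⟨hx, ht⟩
  have hx' : 0 < x := hx
  have htT : t ∈ Ico (0:ℝ) F.T := ⟨ht.1, ht.2.trans_lt ht₀⟩
  have hc : Tendsto (fun p : ℝ × ℝ => F.arc p.1 t) (𝓝[Ioi 0 ×ˢ Icc 0 t₀] (x, t)) (𝓝 (F.arc x t)) :=
    ((F.arc_has hx' htT).continuousAt.tendsto.comp continuousAt_fst.tendsto).mono_left
      nhdsWithin_le_nhds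
  have he : ∀ κ : ℝ, Tendsto (fun p : ℝ × ℝ => Real.exp (κ * |p.2 - t|))
      (𝓝[Ioi 0 ×ˢ Icc 0 t₀] (x, t)) (𝓝 1) := by
    intro κ
    have : Continuous (fun p : ℝ × ℝ => Real.exp (κ * |p.2 - t|)) := by fun_prop
    have h1 := (this.tendsto (x, t)).mono_left
      (nhdsWithin_le_nhds (s := Ioi 0 ×ˢ Icc 0 t₀))
    simpa using h1
  have hlo := (he (-(2 * C))).mul hc
  have hhi := (he (2 * C)).mul hc
  rw [one_mul] at hlo hhi
  refine tendsto_of_tendsto_of_tendsto_of_le_of_le' hlo hhi ?_ ?_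
  · filter_upwards [self_mem_nhdsWithin] with p hp
    have h1 := F.arc_compare ht₀ h hp.1 hp.2 ht
    have h2 := mul_le_mul_of_nonneg_left h1 (Real.exp_pos (-(2 * C) * |p.2 - t|)).le
    rw [← mul_assoc, ← Real.exp_add, abs_sub_comm t p.2] at h2
    have e1 : -(2 * C) * |p.2 - t| + 2 * C * |p.2 - t| = 0 := by ring
    rwa [e1, Real.exp_zero, one_mul] at h2
  · filter_upwards [self_mem_nhdsWithin] with p hp
    exact F.arc_compare ht₀ h hp.1 ht hp.2

end WarpedBergerFlow

namespace WarpedBergerFlow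
variable (F : WarpedBergerFlow)

set_option maxHeartbeats 2000000 in
/-- The barrier argument at an interior space-time maximum. -/
lemma touch {C t₀ : ℝ} (hC : 1 ≤ C) (ht₀ : t₀ < F.T)
    (h : ∀ x > 0, ∀ t ∈ Icc (0:ℝ) t₀, F.RmNorm x t ≤ C) {σ k δ A : ℝ}
    (hσ : σ = 1 ∨ σ = -1) (hk : 0 ≤ k) (hδ : 0 < δ) (hA : A = 24 * C + 25)
    {x t : ℝ} (hx : 0 < x) (ht : t ∈ Ioc 0 t₀)
    (hpos : 0 < σ * (Real.log (F.c x t) - Real.log (F.b x t)) - k)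
    (hmax : ∀ y > 0, ∀ u ∈ Icc 0 t₀,
      σ * (Real.log (F.c y u) - Real.log (F.b y u)) - k - δ * (Real.exp (A * u) * (1 + F.arc y u ^ 4))
      ≤ σ * (Real.log (F.c x t) - Real.log (F.b x t)) - k
        - δ * (Real.exp (A * t) * (1 + F.arc x t ^ 4))) : False := by
  have htI : t ∈ Icc 0 t₀ := ⟨ht.1.le, ht.2⟩
  have htT : t ∈ Ico 0 F.T := ⟨ht.1.le, ht.2.trans_lt ht₀⟩
  have hB := F.profB hC htT (fun y hy => h y hy t htI)
  have hCc := F.profC hC htT (fun y hy => h y hy t htI)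
  have hb := F.b_pos x hx t htT
  have hc := F.c_pos x hx t htT
  have hs : 0 < F.arc x t := hB.s_pos hx
  have hwb : dS F.ξ F.b x t / F.b x t ≤ 1 / F.arc x t + C * F.arc x t := hB.upper hx
  have hwc : dS F.ξ F.c x t / F.c x t ≤ 1 / F.arc x t + C * F.arc x t := hCc.upper hx
  -- space
  have hG : ∀ y > 0, HasDerivAt (fun y => σ * (Real.log (F.c y t) - Real.log (F.b y t)) - k
      - δ * (Real.exp (A * t) * (1 + F.arc y t ^ 4)))
      (F.ξ y t * (σ * (dS F.ξ F.c y t / F.c y t - dS F.ξ F.b y t / F.b y t)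
        - δ * Real.exp (A * t) * (4 * F.arc y t ^ 3))) y := by
    intro y hy
    have h1 := (((((hCc.hb y hy).log (hCc.bpos y hy).ne').sub
      ((hB.hb y hy).log (hB.bpos y hy).ne')).const_mul σ).sub_const k).sub
      (((((hB.hs y hy).pow 4).const_add 1).const_mul (Real.exp (A * t))).const_mul δ)
    refine h1.congr_deriv ?_
    push_cast; ring
  have hD : HasDerivAt (fun y => σ * (dS F.ξ F.c y t / F.c y t - dS F.ξ F.b y t / F.b y t)
        - δ * Real.exp (A * t) * (4 * F.arc y t ^ 3))
      (F.ξ x t * (σ * ((dS F.ξ (dS F.ξ F.c) x t / F.c x t - (dS F.ξ F.c x t / F.c x t) ^ 2)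
          - (dS F.ξ (dS F.ξ F.b) x t / F.b x t - (dS F.ξ F.b x t / F.b x t) ^ 2))
        - δ * Real.exp (A * t) * (12 * F.arc x t ^ 2))) x := by
    have h1 := ((((hCc.hp x hx).div (hCc.hb x hx) hc.ne').sub
      ((hB.hp x hx).div (hB.hb x hx) hb.ne')).const_mul σ).sub
      ((((hB.hs x hx).pow 3).const_mul 4).const_mul (δ * Real.exp (A * t)))
    refine h1.congr_deriv ?_
    push_cast
    field_simp
    ring
  obtain ⟨hD0, hd⟩ := wb_second hx hG (fun y hy => F.ξ_pos y hy t htT)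
    (fun y hy => hmax y hy t htI) hD
  have hd' := nonpos_of_mul_nonpos_right hd (F.ξ_pos x hx t htT)
  -- time
  have hct := wb_thas F.smooth_c hx ⟨ht.1, htT.2⟩
  have hbt := wb_thas F.smooth_b hx ⟨ht.1, htT.2⟩
  have hT : HasDerivAt (fun u => σ * (Real.log (F.c x u) - Real.log (F.b x u)) - k
      - δ * (Real.exp (A * u) * (1 + F.arc x t ^ 4 * Real.exp (8 * C * (t - u)))))
      (σ * (deriv (fun u => F.c x u) t / F.c x t - deriv (fun u => F.b x u) t / F.b x t)
        - δ * Real.exp (A * t) * (A * (1 + F.arc x t ^ 4) - 8 * C * F.arc x t ^ 4)) t := by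
    have e1 := ((hasDerivAt_id t).const_mul A).exp
    have e2 := ((((hasDerivAt_id t).const_sub t).const_mul (8 * C)).exp.const_mul
      (F.arc x t ^ 4)).const_add 1
    have h1 := ((((hct.log hc.ne').sub (hbt.log hb.ne')).const_mul σ).sub_const k).sub
      ((e1.mul e2).const_mul δ)
    refine h1.congr_deriv ?_
    simp
    ring
  have htime := wb_time ht.1 hT (fun u hu => by
    have huI : u ∈ Icc 0 t₀ := ⟨hu.1.le, hu.2.le.trans ht.2⟩
    have h1 := hmax x hx u huI
    have h2 := F.arc_compare ht₀ h hx htI huI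
    have h0 : 0 ≤ F.arc x u :=
      (F.profB hC ⟨huI.1, huI.2.trans_lt ht₀⟩ (fun y hy => h y hy u huI)).s_nonneg hx
    have h3 : F.arc x u ^ 4 ≤ F.arc x t ^ 4 * Real.exp (8 * C * (t - u)) := by
      have := pow_le_pow_left₀ h0 h2 4
      rw [mul_pow, ← Real.exp_nat_mul, abs_of_neg (by linarith [hu.2])] at this
      refine this.trans (le_of_eq ?_)
      rw [mul_comm]; congr 2; push_cast; ring
    have h4 : δ * (Real.exp (A * u) * (1 + F.arc x u ^ 4)) ≤
      δ * (Real.exp (A * u) * (1 + F.arc x t ^ 4 * Real.exp (8 * C * (t - u)))) := by gcongr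
    simp only [sub_self, mul_zero, Real.exp_zero, mul_one]
    linarith)
  rw [F.eq_b x hx t htT, F.eq_c x hx t htT] at htime
  have hreact : σ * (4 * (F.b x t ^ 2 - F.c x t ^ 2) / F.b x t ^ 4) ≤ 0 := by
    rcases hσ with rfl | rfl
    · have : F.b x t < F.c x t := (Real.log_lt_log_iff hb hc).1 (by linarith)
      rw [one_mul]
      exact div_nonpos_of_nonpos_of_nonneg (by nlinarith) (by positivity)
    · have : F.c x t < F.b x t := (Real.log_lt_log_iff hc hb).1 (by linarith)
      have : 0 ≤ (4 * (F.b x t ^ 2 - F.c x t ^ 2) / F.b x t ^ 4) :=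
        div_nonneg (by nlinarith) (by positivity)
      linarith
  set s := F.arc x t
  set e := δ * Real.exp (A * t)
  have he : 0 < e := by positivity
  set wb := dS F.ξ F.b x t / F.b x t with hwb'
  set wc := dS F.ξ F.c x t / F.c x t with hwc'
  set pb := dS F.ξ F.b x t
  set pc := dS F.ξ F.c x t
  set qb := dS F.ξ (dS F.ξ F.b) x t
  set qc := dS F.ξ (dS F.ξ F.c) x t
  have hkey : (qc + 2 * wb * pc - 2 * F.c x t ^ 3 / F.b x t ^ 4) / F.c x t
      - (qb + (wc + wb) * pb + 2 * (F.c x t ^ 2 - 2 * F.b x t ^ 2) / F.b x t ^ 3) / F.b x t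
      = ((qc / F.c x t - wc ^ 2) - (qb / F.b x t - wb ^ 2)) + (wc - wb) * (wc + 2 * wb)
        + 4 * (F.b x t ^ 2 - F.c x t ^ 2) / F.b x t ^ 4 := by
    rw [hwb', hwc']
    field_simp
    ring
  rw [hkey] at htime
  have hdrift : σ * (wc - wb) * (wc + 2 * wb) ≤ e * (12 * s ^ 2 + 12 * C * s ^ 4) := by
    have h1 : σ * (wc - wb) = e * (4 * s ^ 3) := by linarith
    rw [h1]
    have h2 : wc + 2 * wb ≤ 3 * (1 / s + C * s) := by linarith
    calc e * (4 * s ^ 3) * (wc + 2 * wb) ≤ e * (4 * s ^ 3) * (3 * (1 / s + C * s)) := by gcongr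
      _ = e * (12 * s ^ 2 + 12 * C * s ^ 4) := by field_simp; ring
  have hfin : 0 ≤ e * (24 * s ^ 2 + 20 * C * s ^ 4 - A * (1 + s ^ 4)) := by
    nlinarith
  have hneg : 24 * s ^ 2 + 20 * C * s ^ 4 - A * (1 + s ^ 4) < 0 := by
    rw [hA]
    have h1 : 0 ≤ C * s ^ 4 := by positivity
    nlinarith [sq_nonneg (s ^ 2 - 1), pow_pos hs 4]
  nlinarith

lemma growth {C t₀ : ℝ} (hC : 1 ≤ C) (ht₀ : t₀ < F.T)
    (h : ∀ x > 0, ∀ t ∈ Icc (0:ℝ) t₀, F.RmNorm x t ≤ C) {σ k : ℝ}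
    (hσ : σ = 1 ∨ σ = -1) (hk : 0 ≤ k) {x t : ℝ} (hx : 0 < x) (ht : t ∈ Icc 0 t₀) :
    σ * (Real.log (F.c x t) - Real.log (F.b x t)) - k ≤ C * (F.arc x t ^ 2 + F.arc x t) := by
  have htT : t ∈ Ico 0 F.T := ⟨ht.1, ht.2.trans_lt ht₀⟩
  have hB := F.profB hC htT (fun y hy => h y hy t ht)
  have hCc := F.profC hC htT (fun y hy => h y hy t ht)
  have h1 := wb_logratio hB hCc hx
  have h2 := wb_logratio hCc hB hx
  rcases hσ with rfl | rfl <;> linarith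

lemma barrier {C t₀ : ℝ} (hC : 1 ≤ C) (h0 : 0 ≤ t₀) (ht₀ : t₀ < F.T)
    (h : ∀ x > 0, ∀ t ∈ Icc (0:ℝ) t₀, F.RmNorm x t ≤ C) {σ k δ A : ℝ}
    (hσ : σ = 1 ∨ σ = -1) (hk : 0 ≤ k) (hδ : 0 < δ) (hA : A = 24 * C + 25)
    (hinit : ∀ x > 0, σ * (Real.log (F.c x 0) - Real.log (F.b x 0)) - k ≤ 0)
    {x t : ℝ} (hx : 0 < x) (ht : t ∈ Icc 0 t₀) :
    σ * (Real.log (F.c x t) - Real.log (F.b x t)) - k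
      ≤ δ * (Real.exp (A * t) * (1 + F.arc x t ^ 4)) := by
  by_contra hcon
  push Not at hcon
  have h0I : (0:ℝ) ∈ Icc 0 t₀ := ⟨le_rfl, h0⟩
  have h0T : (0:ℝ) ∈ Ico 0 F.T := ⟨le_rfl, F.T_pos⟩
  have hprof : ∀ u ∈ Icc 0 t₀, WBProf C (fun x => F.ξ x u) (fun x => F.arc x u) (fun x => F.b x u)
      (fun x => dS F.ξ F.b x u) (fun x => dS F.ξ (dS F.ξ F.b) x u) := fun u hu =>
    F.profB hC ⟨hu.1, hu.2.trans_lt ht₀⟩ (fun y hy => h y hy u hu)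
  have hC0 : 0 < C := by linarith
  set E := Real.exp (2 * C * t₀) with hE
  have hEpos : 0 < E := Real.exp_pos _
  set a := min 1 (δ / (2 * C)) with ha
  have hapos : 0 < a := by rw [ha]; positivity
  set B := 2 * C / δ + 1 with hBdef
  -- points where the barrier fails have controlled arclength
  have hrange : ∀ y > 0, ∀ u ∈ Icc 0 t₀,
      δ * (Real.exp (A * u) * (1 + F.arc y u ^ 4))
        < σ * (Real.log (F.c y u) - Real.log (F.b y u)) - k → a ≤ F.arc y u ∧ F.arc y u ≤ B := by
    intro y hy u hu hlt
    have hs : 0 < F.arc y u := (hprof u hu).s_pos hy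
    have h1 := F.growth hC ht₀ h hσ hk hy hu
    have h2 : 1 ≤ Real.exp (A * u) := Real.one_le_exp (by
      rw [hA]; have := hu.1; positivity)
    generalize F.arc y u = s at *
    have h3 : δ * (1 + s ^ 4) < C * (s ^ 2 + s) := by
      have : 1 + s ^ 4 ≤ Real.exp (A * u) * (1 + s ^ 4) :=
        le_mul_of_one_le_left (by positivity) h2
      have := mul_le_mul_of_nonneg_left this hδ.le
      linarith
    constructor
    · by_contra hlt
      push Not at hlt
      have h4 : s < 1 := hlt.trans_le (min_le_left _ _)
      have h5 : s < δ / (2 * C) := hlt.trans_le (min_le_right _ _)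
      rw [lt_div_iff₀ (by positivity)] at h5
      have h6 : C * s ^ 2 ≤ C * s := by
        apply mul_le_mul_of_nonneg_left _ hC0.le; nlinarith
      have : 0 < δ * s ^ 4 := by positivity
      linarith
    · by_contra hlt
      push Not at hlt
      have h4 : 1 < s := by
        have : 0 < 2 * C / δ := by positivity
        linarith
      have h5 : 2 * C / δ < s := by linarith
      rw [div_lt_iff₀ hδ] at h5
      have h6 : C * s ≤ C * s ^ 2 := by
        apply mul_le_mul_of_nonneg_left _ hC0.le; nlinarith
      have h7 : 2 * C * s ^ 2 ≤ s * δ * s ^ 2 := by gcongr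
      have h8 : s * δ * s ^ 2 ≤ δ * s ^ 4 := by
        have : 0 < δ * s ^ 3 := by positivity
        nlinarith
      linarith
  obtain ⟨r, hr1, hr⟩ : ∃ r, F.arc r 0 < a / E ∧ 0 < r :=
    (((F.arc_zero h0T).eventually (gt_mem_nhds (by positivity : 0 < a / E))).and
      self_mem_nhdsWithin).exists
  obtain ⟨R, hR1, hR⟩ : ∃ R, E * B < F.arc R 0 ∧ 0 < R :=
    (((F.complete 0 h0T).eventually_gt_atTop (E * B)).and (eventually_gt_atTop 0)).exists
  have hexp : ∀ u ∈ Icc 0 t₀, Real.exp (2 * C * |u|) ≤ E := by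
    intro u hu
    rw [hE, abs_of_nonneg hu.1]
    have := hu.2
    gcongr
  have hxr : ∀ y > 0, ∀ u ∈ Icc 0 t₀,
      δ * (Real.exp (A * u) * (1 + F.arc y u ^ 4))
        < σ * (Real.log (F.c y u) - Real.log (F.b y u)) - k → y ∈ Icc r R := by
    intro y hy u hu hlt
    obtain ⟨h1, h2⟩ := hrange y hy u hu hlt
    have hs0 : 0 < F.arc y 0 := (hprof 0 h0I).s_pos hy
    have hsu : 0 < F.arc y u := (hprof u hu).s_pos hy
    have hmono := (hprof 0 h0I).s_mono.monotoneOn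
    have c1 := F.arc_compare ht₀ h hy h0I hu
    have c2 := F.arc_compare ht₀ h hy hu h0I
    rw [sub_zero] at c1
    rw [zero_sub, abs_neg] at c2
    have c3 : F.arc y u ≤ E * F.arc y 0 :=
      c1.trans (mul_le_mul_of_nonneg_right (hexp u hu) hs0.le)
    have c4 : F.arc y 0 ≤ E * F.arc y u :=
      c2.trans (mul_le_mul_of_nonneg_right (hexp u hu) hsu.le)
    constructor
    · by_contra hlt
      push Not at hlt
      have : F.arc y 0 ≤ F.arc r 0 := hmono hy hr hlt.le
      have : F.arc y 0 < a / E := by linarith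
      rw [lt_div_iff₀ hEpos] at this
      linarith
    · by_contra hlt
      push Not at hlt
      have : F.arc R 0 ≤ F.arc y 0 := hmono hR hy hlt.le
      have : E * F.arc y u ≤ E * B := by gcongr
      linarith
  have hsub : Icc r R ×ˢ Icc 0 t₀ ⊆ Ioi 0 ×ˢ Ico 0 F.T := fun p hp =>
    ⟨lt_of_lt_of_le hr hp.1.1, hp.2.1, hp.2.2.trans_lt ht₀⟩
  have hcontL : ∀ f : ℝ → ℝ → ℝ,
      ContDiffOn ℝ (⊤ : ℕ∞) (fun p : ℝ × ℝ => f p.1 p.2) (Ioi 0 ×ˢ Ico 0 F.T) →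
      (∀ x > 0, ∀ t ∈ Ico (0:ℝ) F.T, 0 < f x t) →
      ContinuousOn (fun p : ℝ × ℝ => Real.log (f p.1 p.2)) (Icc r R ×ˢ Icc 0 t₀) :=
    fun f hf hp => (hf.continuousOn.mono hsub).log
      (fun p hpm => (hp p.1 (hsub hpm).1 p.2 (hsub hpm).2).ne')
  have hcont : ContinuousOn (fun p : ℝ × ℝ =>
      σ * (Real.log (F.c p.1 p.2) - Real.log (F.b p.1 p.2)) - k
        - δ * (Real.exp (A * p.2) * (1 + F.arc p.1 p.2 ^ 4))) (Icc r R ×ˢ Icc 0 t₀) := by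
    have h1 := hcontL F.c F.smooth_c F.c_pos
    have h2 := hcontL F.b F.smooth_b F.b_pos
    have h3 : ContinuousOn (fun p : ℝ × ℝ => F.arc p.1 p.2) (Icc r R ×ˢ Icc 0 t₀) :=
      (F.arc_cont ht₀ h).mono (fun p hp => ⟨lt_of_lt_of_le hr hp.1.1, hp.2⟩)
    have h4 : ContinuousOn (fun p : ℝ × ℝ => Real.exp (A * p.2)) (Icc r R ×ˢ Icc 0 t₀) :=
      (by fun_prop : Continuous (fun p : ℝ × ℝ => Real.exp (A * p.2))).continuousOn
    exact ((continuousOn_const.mul (h1.sub h2)).sub continuousOn_const).sub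
      (continuousOn_const.mul (h4.mul (continuousOn_const.add (h3.pow 4))))
  have hxt : ((x, t) : ℝ × ℝ) ∈ Icc r R ×ˢ Icc 0 t₀ := ⟨hxr x hx t ht hcon, ht⟩
  obtain ⟨⟨x₁, t₁⟩, hm, hmx⟩ := (isCompact_Icc.prod isCompact_Icc).exists_isMaxOn ⟨_, hxt⟩ hcont
  have hM := hmx hxt
  simp only [mem_ofPred_eq] at hM
  have hx₁ : 0 < x₁ := (hsub hm).1
  have ht₁ : t₁ ∈ Icc 0 t₀ := hm.2
  have hφ : 0 ≤ δ * (Real.exp (A * t₁) * (1 + F.arc x₁ t₁ ^ 4)) := by positivity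
  have hpos : 0 < σ * (Real.log (F.c x₁ t₁) - Real.log (F.b x₁ t₁)) - k := by linarith
  have ht₁0 : t₁ ≠ 0 := by
    rintro rfl
    linarith [hinit x₁ hx₁]
  refine F.touch hC ht₀ h hσ hk hδ hA hx₁ ⟨lt_of_le_of_ne ht₁.1 (Ne.symm ht₁0), ht₁.2⟩ hpos ?_
  intro y hy u hu
  by_cases hlt : δ * (Real.exp (A * u) * (1 + F.arc y u ^ 4))
        < σ * (Real.log (F.c y u) - Real.log (F.b y u)) - k
  · exact hmx (show ((y, u) : ℝ × ℝ) ∈ Icc r R ×ˢ Icc 0 t₀ from ⟨hxr y hy u hu hlt, hu⟩)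
  · linarith

lemma maxprin (hBC : F.BoundedCurvature) {σ k : ℝ}
    (hσ : σ = 1 ∨ σ = -1) (hk : 0 ≤ k)
    (hinit : ∀ x > 0, σ * (Real.log (F.c x 0) - Real.log (F.b x 0)) - k ≤ 0)
    {x t : ℝ} (hx : 0 < x) (ht : t ∈ Ico 0 F.T) :
    σ * (Real.log (F.c x t) - Real.log (F.b x t)) - k ≤ 0 := by
  obtain ⟨C, hC⟩ := hBC t ht
  have hC' : ∀ x > 0, ∀ u ∈ Icc (0:ℝ) t, F.RmNorm x u ≤ max C 1 := fun x hx u hu =>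
    (hC x hx u hu).trans (le_max_left _ _)
  by_contra hcon
  push Not at hcon
  set K := Real.exp ((24 * max C 1 + 25) * t) * (1 + F.arc x t ^ 4) with hK
  have hKpos : 0 < K := by rw [hK]; positivity
  set v := σ * (Real.log (F.c x t) - Real.log (F.b x t)) - k
  have h1 : v ≤ v / (2 * K) * K := F.barrier (le_max_right C 1) ht.1 ht.2 hC' hσ hk
    (δ := v / (2 * K)) (by positivity) rfl hinit hx ⟨ht.1, le_rfl⟩
  have h2 : v / (2 * K) * K = v / 2 := by field_simp
  linarith

end WarpedBergerFlow

/-- with `ε := inf_{x>0} (c/b)(x,0)`, for every `x > 0` and `t ∈ [0,T)`,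
`ε ≤ (c/b)(x,t) ≤ 1`. -/
theorem warpedBerger_cb_ratio_bounds (F : WarpedBergerFlow) (hBC : F.BoundedCurvature)
    (ε : ℝ) (hε : ε = sInf {r : ℝ | ∃ x > 0, r = F.c x 0 / F.b x 0}) :
    ∀ x > 0, ∀ t ∈ Set.Ico (0:ℝ) F.T,
      ε ≤ F.c x t / F.b x t ∧ F.c x t / F.b x t ≤ 1 := by
  intro x hx t ht
  have h0T : (0:ℝ) ∈ Set.Ico 0 F.T := ⟨le_rfl, F.T_pos⟩
  have hb := F.b_pos x hx t ht
  have hc := F.c_pos x hx t ht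
  constructor
  · rcases le_or_gt ε 0 with hε0 | hε0
    · exact hε0.trans (div_pos hc hb).le
    have hle : ∀ y > 0, ε ≤ F.c y 0 / F.b y 0 := by
      intro y hy
      rw [hε]
      refine csInf_le ⟨0, ?_⟩ ⟨y, hy, rfl⟩
      rintro r ⟨z, hz, rfl⟩
      exact (div_pos (F.c_pos z hz 0 h0T) (F.b_pos z hz 0 h0T)).le
    have hε1 : ε ≤ 1 := (hle 1 one_pos).trans
      ((div_le_one (F.b_pos 1 one_pos 0 h0T)).2 (F.ordered_init 1 one_pos))
    have h := F.maxprin hBC (σ := -1) (k := -Real.log ε) (Or.inr rfl)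
      (by have := Real.log_nonpos hε0.le hε1; linarith) (fun y hy => by
        have hby := F.b_pos y hy 0 h0T
        have hcy := F.c_pos y hy 0 h0T
        have := Real.log_le_log hε0 (hle y hy)
        rw [Real.log_div hcy.ne' hby.ne'] at this
        linarith) hx ht
    rw [← Real.log_le_log_iff hε0 (div_pos hc hb), Real.log_div hc.ne' hb.ne']
    linarith
  · have h := F.maxprin hBC (σ := 1) (k := 0) (Or.inl rfl) le_rfl (fun y hy => by
        have := Real.log_le_log (F.c_pos y hy 0 h0T) (F.ordered_init y hy)
        linarith) hx ht
    rw [div_le_one hb, ← Real.log_le_log_iff hc hb]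
    linarith
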